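/- Let δ, θ₁, θ₂ ∈ (0,1), a := (1-δ)/2, and let w be a real number with a ≤ w ≤ 1-a. Then over all pairs of distributions p₀, p₁ on a finite set Y with at least three elements satisfying ‖(1-w)p₀ - w p₁‖₁ ≤ δ, the maximum of the relative entropy D(p_{θ₁}‖p_{θ₂}) equals (a/(w(1-w)))·((1-θ₁)w + θ₁(1-w))·ln( ((1-θ₁)w + θ₁(1-w)) / ((1-θ₂)w + θ₂(1-w)) ) + (1 - a/(1-w))·(1-θ₁)·ln((1-θ₁)/(1-θ₂)) + (1 - a/w)·θ₁·ln(θ₁/θ₂), and it is attained by the pair p̄₀ := (a/(1-w), 1 - a/(1-w), 0), p̄₁ := (a/w, 0, 1 - a/w) supported on three elements of Y. -/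

import Mathlib

/-!
The summand `K(u, v) = s log (s / t)`, with `s = (1-θ₁)u + θ₁v` and `t = (1-θ₂)u + θ₂v`, is
positively homogeneous (`entTerm_smul`) and, by the log-sum inequality, subadditive
(`entTerm_add_le`) on the closed quadrant. For each `y` put `m = min ((1-w) p₀ y) (w p₁ y)`. Then
`(p₀ y, p₁ y) = m (1/(1-w), 1/w) + (p₀ y - m/(1-w)) (1, 0) + (p₁ y - m/w) (0, 1)`
with nonnegative coefficients, so sublinearity bounds `K(p₀ y, p₁ y)`. Summing over `y` gives
`D ≤ M K(1/(1-w), 1/w) + (1 - M/(1-w)) K(1, 0) + (1 - M/w) K(0, 1)`, where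
`M = ∑ m = (1 - ‖(1-w)p₀ - w p₁‖₁)/2 ≥ a`. By sublinearity again the right side is nonincreasing in
`M`, so it is at most its value at `M = a`, which is the claimed maximum. The three-point pair turns
every inequality into an equality, which is checked directly.
-/

open Finset Real

/-- A distribution on a finite set `Y`. -/
def IsDist {Y : Type*} [Fintype Y] (p : Y → ℝ) : Prop :=
  (∀ y, 0 ≤ p y) ∧ ∑ y, p y = 1

/-- `‖(1-w)p₀ - w p₁‖₁`. -/
noncomputable def l1W {Y : Type*} [Fintype Y] (w : ℝ) (p0 p1 : Y → ℝ) : ℝ :=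
  ∑ y, |(1 - w) * p0 y - w * p1 y|

/-- The mixture `p_θ := (1-θ)p₀ + θ p₁`. -/
noncomputable def mix {Y : Type*} (θ : ℝ) (p0 p1 : Y → ℝ) : Y → ℝ :=
  fun y => (1 - θ) * p0 y + θ * p1 y

/-- The relative entropy `D(q‖q')`, with a term taken to be `0` whenever `q y = 0`. -/
noncomputable def relEnt {Y : Type*} [Fintype Y] (q q' : Y → ℝ) : ℝ :=
  ∑ y, if q y = 0 then 0 else q y * Real.log (q y / q' y)

/-- One term of `D(p_{θ₁}‖p_{θ₂})` as a function of `(u, v) = (p₀ y, p₁ y)`. No case distinction is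
needed when the mixture vanishes, since the factor in front of the logarithm is then `0`. -/
noncomputable def entTerm (θ₁ θ₂ u v : ℝ) : ℝ :=
  ((1 - θ₁) * u + θ₁ * v) * Real.log (((1 - θ₁) * u + θ₁ * v) / ((1 - θ₂) * u + θ₂ * v))

lemma relEnt_mix {Y : Type*} [Fintype Y] (θ₁ θ₂ : ℝ) (p0 p1 : Y → ℝ) :
    relEnt (mix θ₁ p0 p1) (mix θ₂ p0 p1) = ∑ y, entTerm θ₁ θ₂ (p0 y) (p1 y) := by
  unfold relEnt mix entTerm
  refine Finset.sum_congr rfl fun y _ => ?_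
  split_ifs with h
  · rw [h, zero_mul]
  · rfl

lemma entTerm_smul (θ₁ θ₂ c u v : ℝ) :
    entTerm θ₁ θ₂ (c * u) (c * v) = c * entTerm θ₁ θ₂ u v := by
  unfold entTerm
  rcases eq_or_ne c 0 with rfl | hc
  · simp
  · have h1 : ∀ θ : ℝ, (1 - θ) * (c * u) + θ * (c * v) = c * ((1 - θ) * u + θ * v) := by
      intro θ; ring
    rw [h1, h1, mul_div_mul_left _ _ hc, mul_assoc]

/-- The log-sum inequality for two pairs of positive numbers. -/
lemma logSum_two {s₁ s₂ t₁ t₂ : ℝ} (hs₁ : 0 < s₁) (hs₂ : 0 < s₂) (ht₁ : 0 < t₁) (ht₂ : 0 < t₂) :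
    (s₁ + s₂) * Real.log ((s₁ + s₂) / (t₁ + t₂))
      ≤ s₁ * Real.log (s₁ / t₁) + s₂ * Real.log (s₂ / t₂) := by
  -- `1 - 1/x ≤ log x` at `x = (s / t) / (S / T)`
  have key : ∀ {s t S T : ℝ}, 0 < s → 0 < t → 0 < S → 0 < T →
      s * Real.log (S / T) + s - t * S / T ≤ s * Real.log (s / t) := by
    intro s t S T hs ht hS hT
    have h := Real.one_sub_inv_le_log_of_pos (x := (s / t) / (S / T)) (by positivity)
    rw [Real.log_div (by positivity) (by positivity)] at h
    have h2 := mul_le_mul_of_nonneg_left h hs.le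
    have h3 : s * (1 - ((s / t) / (S / T))⁻¹) = s - t * S / T := by
      field_simp
    rw [h3] at h2
    linarith
  have hS : 0 < s₁ + s₂ := by positivity
  have hT : 0 < t₁ + t₂ := by positivity
  have k1 := key hs₁ ht₁ hS hT
  have k2 := key hs₂ ht₂ hS hT
  have h3 : t₁ * (s₁ + s₂) / (t₁ + t₂) + t₂ * (s₁ + s₂) / (t₁ + t₂) = s₁ + s₂ := by
    field_simp
  linarith

lemma mix_pos {θ u v : ℝ} (hθ : θ ∈ Set.Ioo (0 : ℝ) 1) (hu : 0 ≤ u) (hv : 0 ≤ v)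
    (h : ¬ (u = 0 ∧ v = 0)) : 0 < (1 - θ) * u + θ * v := by
  have h1 : 0 < 1 - θ := by linarith [hθ.2]
  have h0 := hθ.1
  rcases hu.eq_or_lt with rfl | hu
  · have hv : 0 < v := lt_of_le_of_ne hv fun h' => h ⟨rfl, h'.symm⟩
    positivity
  · positivity

lemma entTerm_add_le {θ₁ θ₂ u v u' v' : ℝ} (hθ₁ : θ₁ ∈ Set.Ioo (0 : ℝ) 1)
    (hθ₂ : θ₂ ∈ Set.Ioo (0 : ℝ) 1) (hu : 0 ≤ u) (hv : 0 ≤ v) (hu' : 0 ≤ u') (hv' : 0 ≤ v') :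
    entTerm θ₁ θ₂ (u + u') (v + v') ≤ entTerm θ₁ θ₂ u v + entTerm θ₁ θ₂ u' v' := by
  by_cases h : u = 0 ∧ v = 0
  · obtain ⟨rfl, rfl⟩ := h
    simp [entTerm]
  by_cases h' : u' = 0 ∧ v' = 0
  · obtain ⟨rfl, rfl⟩ := h'
    simp [entTerm]
  have key := logSum_two (mix_pos hθ₁ hu hv h) (mix_pos hθ₁ hu' hv' h')
    (mix_pos hθ₂ hu hv h) (mix_pos hθ₂ hu' hv' h')
  have e : ∀ θ : ℝ, (1 - θ) * (u + u') + θ * (v + v')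
      = ((1 - θ) * u + θ * v) + ((1 - θ) * u' + θ * v') := by
    intro θ; ring
  unfold entTerm
  rw [e, e]
  exact key

/-- Sublinearity applied to a conic combination of a direction `(α, β)` and the two coordinate
directions. -/
lemma entTerm_cone_le {θ₁ θ₂ α β m b c : ℝ} (hθ₁ : θ₁ ∈ Set.Ioo (0 : ℝ) 1)
    (hθ₂ : θ₂ ∈ Set.Ioo (0 : ℝ) 1) (hα : 0 ≤ α) (hβ : 0 ≤ β) (hm : 0 ≤ m) (hb : 0 ≤ b)
    (hc : 0 ≤ c) :
    entTerm θ₁ θ₂ (m * α + b) (m * β + c)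
      ≤ m * entTerm θ₁ θ₂ α β + b * entTerm θ₁ θ₂ 1 0 + c * entTerm θ₁ θ₂ 0 1 := by
  have h1 := entTerm_add_le hθ₁ hθ₂ (mul_nonneg hm hα) (mul_nonneg hm hβ) hb hc
  have h2 := entTerm_add_le hθ₁ hθ₂ hb le_rfl le_rfl hc
  have e1 := entTerm_smul θ₁ θ₂ m α β
  have e2 := entTerm_smul θ₁ θ₂ b 1 0
  have e3 := entTerm_smul θ₁ θ₂ c 0 1
  simp only [mul_one, mul_zero] at e2 e3
  rw [add_zero, zero_add] at h2
  linarith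

/-- The claimed maximum, expressed through `entTerm` at the extreme directions. -/
lemma maxValue_eq {θ₁ θ₂ a w : ℝ} (hw0 : 0 < w) (hw1 : 0 < 1 - w) :
    a / (w * (1 - w)) * ((1 - θ₁) * w + θ₁ * (1 - w))
        * Real.log (((1 - θ₁) * w + θ₁ * (1 - w)) / ((1 - θ₂) * w + θ₂ * (1 - w)))
      + (1 - a / (1 - w)) * (1 - θ₁) * Real.log ((1 - θ₁) / (1 - θ₂))
      + (1 - a / w) * θ₁ * Real.log (θ₁ / θ₂)
    = a * entTerm θ₁ θ₂ (1 / (1 - w)) (1 / w) + (1 - a / (1 - w)) * entTerm θ₁ θ₂ 1 0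
      + (1 - a / w) * entTerm θ₁ θ₂ 0 1 := by
  have e : entTerm θ₁ θ₂ (1 / (1 - w)) (1 / w) = 1 / (w * (1 - w)) * entTerm θ₁ θ₂ w (1 - w) := by
    rw [← entTerm_smul]
    congr 1 <;> field_simp
  rw [e]
  simp only [entTerm, mul_one, mul_zero, add_zero, zero_add]
  ring

theorem stmt10 (δ θ₁ θ₂ a w : ℝ) (hδ : δ ∈ Set.Ioo (0 : ℝ) 1)
    (hθ₁ : θ₁ ∈ Set.Ioo (0 : ℝ) 1) (hθ₂ : θ₂ ∈ Set.Ioo (0 : ℝ) 1)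
    (ha : a = (1 - δ) / 2) (hw : a ≤ w) (hw' : w ≤ 1 - a)
    (Y : Type) [Fintype Y] [DecidableEq Y] (hY : 3 ≤ Fintype.card Y) :
    (∀ p0 p1 : Y → ℝ, IsDist p0 → IsDist p1 → l1W w p0 p1 ≤ δ →
        relEnt (mix θ₁ p0 p1) (mix θ₂ p0 p1)
          ≤ a / (w * (1 - w)) * ((1 - θ₁) * w + θ₁ * (1 - w))
              * Real.log (((1 - θ₁) * w + θ₁ * (1 - w)) / ((1 - θ₂) * w + θ₂ * (1 - w)))
            + (1 - a / (1 - w)) * (1 - θ₁) * Real.log ((1 - θ₁) / (1 - θ₂))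
            + (1 - a / w) * θ₁ * Real.log (θ₁ / θ₂)) ∧
    (∀ y₁ y₂ y₃ : Y, y₁ ≠ y₂ → y₁ ≠ y₃ → y₂ ≠ y₃ →
      ∀ pb0 pb1 : Y → ℝ,
        pb0 = (fun y => if y = y₁ then a / (1 - w) else if y = y₂ then 1 - a / (1 - w) else 0) →
        pb1 = (fun y => if y = y₁ then a / w else if y = y₃ then 1 - a / w else 0) →
        IsDist pb0 ∧ IsDist pb1 ∧ l1W w pb0 pb1 ≤ δ ∧
        relEnt (mix θ₁ pb0 pb1) (mix θ₂ pb0 pb1)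
          = a / (w * (1 - w)) * ((1 - θ₁) * w + θ₁ * (1 - w))
              * Real.log (((1 - θ₁) * w + θ₁ * (1 - w)) / ((1 - θ₂) * w + θ₂ * (1 - w)))
            + (1 - a / (1 - w)) * (1 - θ₁) * Real.log ((1 - θ₁) / (1 - θ₂))
            + (1 - a / w) * θ₁ * Real.log (θ₁ / θ₂)) := by
  have ha0 : 0 < a := by rw [ha]; linarith [hδ.2]
  have hw0 : 0 < w := lt_of_lt_of_le ha0 hw
  have hw1 : 0 < 1 - w := by linarith
  have haw : 0 ≤ 1 - a / w := by
    rw [sub_nonneg, div_le_one hw0]; exact hw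
  have haw' : 0 ≤ 1 - a / (1 - w) := by
    rw [sub_nonneg, div_le_one hw1]; linarith
  rw [maxValue_eq hw0 hw1]
  constructor
  · intro p0 p1 hp0 hp1 hl
    rw [relEnt_mix]
    set A := entTerm θ₁ θ₂ (1 / (1 - w)) (1 / w) with hA
    set B := entTerm θ₁ θ₂ 1 0 with hB
    set C := entTerm θ₁ θ₂ 0 1 with hC
    let m : Y → ℝ := fun y => min ((1 - w) * p0 y) (w * p1 y)
    have hpt : ∀ y, entTerm θ₁ θ₂ (p0 y) (p1 y)
        ≤ m y * A + (p0 y - m y * (1 / (1 - w))) * B + (p1 y - m y * (1 / w)) * C := by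
      intro y
      have hm : 0 ≤ m y :=
        le_min (mul_nonneg hw1.le (hp0.1 y)) (mul_nonneg hw0.le (hp1.1 y))
      have hb : 0 ≤ p0 y - m y * (1 / (1 - w)) := by
        rw [sub_nonneg, mul_one_div, div_le_iff₀ hw1, mul_comm (p0 y)]
        exact min_le_left _ _
      have hc : 0 ≤ p1 y - m y * (1 / w) := by
        rw [sub_nonneg, mul_one_div, div_le_iff₀ hw0, mul_comm (p1 y)]
        exact min_le_right _ _
      have h := entTerm_cone_le hθ₁ hθ₂ (one_div_pos.2 hw1).le (one_div_pos.2 hw0).le hm hb hc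
      rwa [add_sub_cancel, add_sub_cancel] at h
    have hsum := Finset.sum_le_sum fun y (_ : y ∈ Finset.univ) => hpt y
    have hM : a ≤ ∑ y, m y := by
      -- `2 min x z = x + z - |x - z|`, summed over `y`
      have e : ∑ y, m y
          = ((1 - w) * ∑ y, p0 y + w * ∑ y, p1 y - l1W w p0 p1) / 2 := by
        unfold l1W
        rw [Finset.mul_sum, Finset.mul_sum, ← Finset.sum_add_distrib, ← Finset.sum_sub_distrib,
          Finset.sum_div]
        refine Finset.sum_congr rfl fun y _ => ?_
        simp only [m]
        rw [min_def]
        split_ifs with h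
        · rw [abs_of_nonpos (by linarith)]; ring
        · rw [abs_of_nonneg (by linarith)]; ring
      rw [e, hp0.2, hp1.2, ha]
      linarith
    have hs : ∑ y, (m y * A + (p0 y - m y * (1 / (1 - w))) * B + (p1 y - m y * (1 / w)) * C)
        = (∑ y, m y) * A + (1 - (∑ y, m y) * (1 / (1 - w))) * B
          + (1 - (∑ y, m y) * (1 / w)) * C := by
      simp only [Finset.sum_add_distrib, ← Finset.sum_mul, Finset.sum_sub_distrib, hp0.2, hp1.2]
    -- the coefficient of `∑ y, m y` in the bound is nonpositive
    have hmono : A ≤ 1 / (1 - w) * B + 1 / w * C := by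
      have h := entTerm_cone_le (α := 0) (β := 0) (m := 0) hθ₁ hθ₂ le_rfl le_rfl le_rfl
        (one_div_pos.2 hw1).le (one_div_pos.2 hw0).le
      simpa only [zero_mul, zero_add] using h
    rw [hs] at hsum
    refine hsum.trans ?_
    have h := mul_nonneg (sub_nonneg.2 hM) (sub_nonneg.2 hmono)
    have e : a * A + (1 - a / (1 - w)) * B + (1 - a / w) * C
        - ((∑ y, m y) * A + (1 - (∑ y, m y) * (1 / (1 - w))) * B
          + (1 - (∑ y, m y) * (1 / w)) * C)
        = (∑ y, m y - a) * (1 / (1 - w) * B + 1 / w * C - A) := by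
      ring
    linarith
  · intro y₁ y₂ y₃ h12 h13 h23 pb0 pb1 hb0 hb1
    -- sums of functions of `(pb0 y, pb1 y)` reduce to the three support points
    have hsum3 : ∀ F : ℝ → ℝ → ℝ, F 0 0 = 0 → ∑ y, F (pb0 y) (pb1 y)
        = F (a / (1 - w)) (a / w) + F (1 - a / (1 - w)) 0 + F 0 (1 - a / w) := by
      intro F hF
      rw [← Finset.sum_subset (Finset.subset_univ {y₁, y₂, y₃})]
      · rw [Finset.sum_insert (by simp [h12, h13]), Finset.sum_insert (by simp [h23]),
          Finset.sum_singleton]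
        simp [hb0, hb1, h12.symm, h13.symm, h23, h23.symm, add_assoc]
      · intro y _ hy
        simp only [Finset.mem_insert, Finset.mem_singleton, not_or] at hy
        simp [hb0, hb1, hy, hF]
    refine ⟨⟨?_, ?_⟩, ⟨?_, ?_⟩, ?_, ?_⟩
    · intro y
      rw [hb0]
      dsimp only
      split_ifs
      · positivity
      · exact haw'
      · exact le_rfl
    · rw [hsum3 (fun u _ => u) rfl]; ring
    · intro y
      rw [hb1]
      dsimp only
      split_ifs
      · positivity
      · exact haw
      · exact le_rfl
    · rw [hsum3 (fun _ v => v) rfl]; ring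
    · unfold l1W
      rw [hsum3 (fun u v => |(1 - w) * u - w * v|) (by simp)]
      have e1 : (1 - w) * (a / (1 - w)) - w * (a / w) = 0 := by
        field_simp; ring
      have e2 : (1 - w) * (1 - a / (1 - w)) = 1 - w - a := by
        field_simp
      have e3 : w * (1 - a / w) = w - a := by
        field_simp
      simp only [mul_zero, sub_zero, zero_sub, abs_neg, e1, e2, e3, abs_zero]
      rw [abs_of_nonneg (by linarith), abs_of_nonneg (by linarith)]
      linarith
    · rw [relEnt_mix, hsum3 (entTerm θ₁ θ₂) (by simp [entTerm])]
      have e1 := entTerm_smul θ₁ θ₂ a (1 / (1 - w)) (1 / w)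
      have e2 := entTerm_smul θ₁ θ₂ (1 - a / (1 - w)) 1 0
      have e3 := entTerm_smul θ₁ θ₂ (1 - a / w) 0 1
      simp only [mul_one, mul_zero, mul_one_div] at e1 e2 e3
      rw [e1, e2, e3]
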